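/- Let F be a field of characteristic p > 0 (p prime). The universal enveloping algebra U(sl₂(F)) is integral over its center: every element of U(sl₂(F)) is a root of a monic polynomial with coefficients in the center of U(sl₂(F)). -/

import Mathlib

open LieAlgebra.SpecialLinear

noncomputable section

namespace UeaSl2

section
variable {F U : Type*} [Field F] [Ring U] [Algebra F U] {e f h : U}

theorem h_fpow (hf : h * f = f * h - (2 : F) • f) (n : ℕ) :
    h * f ^ n = f ^ n * h - (2 * n : F) • f ^ n := by
  induction n with
  | zero => simp
  | succ n ih =>
    calc h * f ^ (n + 1) = (h * f ^ n) * f := by rw [pow_succ, mul_assoc]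
      _ = f ^ n * (h * f) - (2 * n : F) • (f ^ n * f) := by
        rw [ih, sub_mul, smul_mul_assoc, mul_assoc]
      _ = _ := by
        rw [hf, mul_sub, mul_smul_comm, ← mul_assoc, ← pow_succ]
        push_cast
        module

theorem e_fpow (hf : h * f = f * h - (2 : F) • f) (ef : e * f = f * e + h) (n : ℕ) :
    e * f ^ (n + 1) = f ^ (n + 1) * e + (n + 1 : F) • (f ^ n * h)
      - ((n + 1) * n : F) • f ^ n := by
  induction n with
  | zero => simp [ef]
  | succ n ih =>
    calc e * f ^ (n + 1 + 1) = (e * f ^ (n + 1)) * f := by rw [pow_succ, mul_assoc]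
      _ = f ^ (n + 1) * (e * f) + (n + 1 : F) • (f ^ n * (h * f))
            - ((n + 1) * n : F) • (f ^ n * f) := by
        rw [ih, sub_mul, add_mul, smul_mul_assoc, smul_mul_assoc, mul_assoc, mul_assoc]
      _ = _ := by
        rw [hf, ef, mul_sub, mul_add, mul_smul_comm, ← mul_assoc, ← mul_assoc, ← pow_succ,
          ← pow_succ]
        push_cast
        module

theorem mem_center_of (gen : Algebra.adjoin F {e, f, h} = ⊤) {z : U}
    (h1 : e * z = z * e) (h2 : f * z = z * f) (h3 : h * z = z * h) :
    z ∈ Subring.center U := by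
  rw [Subring.mem_center_iff]
  intro g
  have hg : g ∈ Algebra.adjoin F {e, f, h} := by rw [gen]; trivial
  induction hg using Algebra.adjoin_induction with
  | mem x hx =>
    rcases hx with rfl | rfl | rfl <;> assumption
  | algebraMap r => exact Algebra.commutes r z
  | add x y _ _ hx hy => rw [add_mul, mul_add, hx, hy]
  | mul x y _ _ hx hy => rw [mul_assoc, hy, ← mul_assoc, hx, mul_assoc]

theorem fp_center (p : ℕ) (hp : p.Prime) [CharP F p]
    (gen : Algebra.adjoin F {e, f, h} = ⊤)
    (hf : h * f = f * h - (2 : F) • f) (ef : e * f = f * e + h) :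
    f ^ p ∈ Subring.center U := by
  have hp0 : (p : F) = 0 := CharP.cast_eq_zero F p
  refine mem_center_of gen ?_ ?_ ?_
  · obtain ⟨n, rfl⟩ : ∃ n, p = n + 1 := ⟨p - 1, by have := hp.pos; omega⟩
    push_cast at hp0
    rw [e_fpow hf ef, hp0]; simp
  · exact (Commute.self_pow f p)
  · rw [h_fpow hf, hp0]; simp

theorem hp_comm [Nontrivial U] (p : ℕ) (hp : p.Prime) [CharP F p] (c : F)
    (hc : c ^ p = c) (hx : e * h = (h - algebraMap F U c) * e) :
    e * (h ^ p - h) = (h ^ p - h) * e := by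
  have := Fact.mk hp
  have : CharP U p := charP_of_injective_algebraMap (algebraMap F U).injective p
  have key : ∀ n : ℕ, e * h ^ n = (h - algebraMap F U c) ^ n * e := by
    intro n
    induction n with
    | zero => simp
    | succ n ih => rw [pow_succ, ← mul_assoc, ih, mul_assoc, hx, ← mul_assoc, ← pow_succ]
  rw [mul_sub, key, sub_pow_char_of_commute _ (Algebra.commutes c h).symm, ← map_pow, hc, hx]
  noncomm_ring

theorem two_pow_char (p : ℕ) (hp : p.Prime) [CharP F p] : (2 : F) ^ p = 2 := by
  have := Fact.mk hp
  have := map_natCast (frobenius F p) 2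
  simpa [frobenius_def] using this

theorem main (p : ℕ) (hp : p.Prime) [CharP F p]
    (gen : Algebra.adjoin F {e, f, h} = ⊤)
    (hf : h * f = f * h - (2 : F) • f) (he : h * e = e * h + (2 : F) • e)
    (ef : e * f = f * e + h) (u : U) : IsIntegral (Subring.center U) u := by
  nontriviality U
  have hfp := fp_center (F := F) p hp gen hf ef
  have hep : e ^ p ∈ Subring.center U := by
    refine fp_center (F := F) (e := f) (f := e) (h := -h) p hp ?_ ?_ ?_
    · rw [eq_top_iff, ← gen]
      refine Algebra.adjoin_le ?_
      rintro x (rfl | rfl | rfl)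
      · exact Algebra.subset_adjoin (by simp)
      · exact Algebra.subset_adjoin (by simp)
      · rw [← neg_neg x]
        exact neg_mem (Algebra.subset_adjoin (by simp))
    · rw [neg_mul, he]; simp only [mul_neg]; module
    · rw [ef]; abel
  have hhp : h ^ p - h ∈ Subring.center U := by
    refine mem_center_of gen ?_ ?_ ?_
    · refine hp_comm (F := F) p hp 2 (two_pow_char p hp) ?_
      rw [sub_mul, he, ← Algebra.smul_def]; abel
    · refine hp_comm (F := F) p hp (-2) ?_ ?_
      · rcases hp.eq_two_or_odd' with rfl | ho
        · have : (2 : F) = 0 := by exact_mod_cast CharP.cast_eq_zero F 2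
          simp [this]
        · rw [ho.neg_pow, two_pow_char p hp]
      · rw [sub_mul, hf, ← Algebra.smul_def]; module
    · exact (((Commute.refl h).pow_right p).sub_right (Commute.refl h))
  have intf : IsIntegral (Subring.center U) f := by
    refine IsIntegral.of_pow hp.pos ?_
    exact isIntegral_algebraMap (x := (⟨f ^ p, hfp⟩ : Subring.center U))
  have inte : IsIntegral (Subring.center U) e := by
    refine IsIntegral.of_pow hp.pos ?_
    exact isIntegral_algebraMap (x := (⟨e ^ p, hep⟩ : Subring.center U))
  have inth : IsIntegral (Subring.center U) h := by
    refine ⟨Polynomial.X ^ p - (Polynomial.X + Polynomial.C ⟨h ^ p - h, hhp⟩), ?_, ?_⟩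
    · refine Polynomial.monic_X_pow_sub ?_
      refine (Polynomial.degree_X_add_C _).le.trans_lt ?_
      exact_mod_cast hp.one_lt
    · rw [← Polynomial.aeval_def]
      simp only [map_sub, map_add, map_pow, Polynomial.aeval_X, Polynomial.aeval_C]
      change h ^ p - (h + (h ^ p - h)) = 0
      abel
  set Z := Subring.center U
  set SA := Algebra.adjoin Z {f}
  set SB := Algebra.adjoin Z {h}
  set SC := Algebra.adjoin Z {e}
  set A := Subalgebra.toSubmodule SA with hA
  set B := Subalgebra.toSubmodule SB with hB
  set C := Subalgebra.toSubmodule SC with hC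
  have fgM : (A * B * C).FG :=
    (intf.fg_adjoin_singleton.mul inth.fg_adjoin_singleton).mul inte.fg_adjoin_singleton
  have smulmem : ∀ (N : Submodule Z U) (c : F) (x : U), x ∈ N → c • x ∈ N := by
    intro N c x hx
    have hc : algebraMap F U c ∈ Z :=
      Subring.mem_center_iff.2 fun g => (Algebra.commutes c g).symm
    rw [Algebra.smul_def]
    exact N.smul_mem (⟨_, hc⟩ : Z) hx
  have fA : f ∈ SA := Algebra.subset_adjoin rfl
  have hBm : h ∈ SB := Algebra.subset_adjoin rfl
  have eC : e ∈ SC := Algebra.subset_adjoin rfl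
  have span_pow : ∀ (x : U), Subalgebra.toSubmodule (Algebra.adjoin Z {x})
      = Submodule.span Z (Set.range (fun n : ℕ => x ^ n)) := by
    intro x
    rw [Algebra.adjoin_eq_span]
    congr 1
    ext y
    simp [Submonoid.mem_closure_singleton]
  -- `x * N ≤ P` for `N = Z[y]` can be checked on powers
  have chk : ∀ (x y : U) (P : Submodule Z U), (∀ n : ℕ, x * y ^ n ∈ P) →
      ∀ a ∈ Algebra.adjoin Z {y}, x * a ∈ P := by
    intro x y P hP a ha
    have hle : Subalgebra.toSubmodule (Algebra.adjoin Z {y})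
        ≤ P.comap (LinearMap.mulLeft Z x) := by
      rw [span_pow, Submodule.span_le]
      rintro _ ⟨n, rfl⟩
      exact hP n
    exact hle ha
  have hAB : ∀ a ∈ SA, h * a ∈ A * B := by
    refine chk h f _ fun n => ?_
    rw [h_fpow hf]
    refine sub_mem (Submodule.mul_mem_mul (pow_mem fA n) hBm) (smulmem _ _ _ ?_)
    rw [← mul_one (f ^ n)]
    exact Submodule.mul_mem_mul (pow_mem fA n) (one_mem SB)
  have eA : ∀ a ∈ SA, e * a ∈ A * (SB.toSubmodule ⊔ Submodule.span Z {e}) := by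
    refine chk e f _ fun n => ?_
    have hBm' : h ∈ SB.toSubmodule ⊔ Submodule.span Z {e} := Submodule.mem_sup_left hBm
    have hCm' : e ∈ SB.toSubmodule ⊔ Submodule.span Z {e} := Submodule.mem_sup_right (Submodule.mem_span_singleton_self e)
    have h1' : (1 : U) ∈ SB.toSubmodule ⊔ Submodule.span Z {e} := Submodule.mem_sup_left (one_mem SB)
    cases n with
    | zero => simpa using Submodule.mul_mem_mul (show (1 : U) ∈ A from one_mem SA) hCm'
    | succ n =>
      rw [e_fpow hf ef]
      refine sub_mem (add_mem (Submodule.mul_mem_mul (pow_mem fA _) hCm')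
        (smulmem _ _ _ (Submodule.mul_mem_mul (pow_mem fA _) hBm'))) (smulmem _ _ _ ?_)
      rw [← mul_one (f ^ n)]
      exact Submodule.mul_mem_mul (pow_mem fA n) h1'
  have eB : ∀ b ∈ SB, e * b ∈ B * C := by
    have eh : e * h = (h - algebraMap F U 2) * e := by
      rw [sub_mul, he, ← Algebra.smul_def]; abel
    refine chk e h _ fun n => ?_
    have key : e * h ^ n = (h - algebraMap F U 2) ^ n * e := by
      induction n with
      | zero => simp
      | succ n ih => rw [pow_succ, ← mul_assoc, ih, mul_assoc, eh, ← mul_assoc, ← pow_succ]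
    rw [key]
    refine Submodule.mul_mem_mul (pow_mem (sub_mem hBm ?_) n) eC
    rw [Algebra.algebraMap_eq_smul_one]
    exact smulmem B _ _ (one_mem SB)
  have AA : A * A = A := SA.isIdempotentElem_toSubmodule
  have BB : B * B = B := SB.isIdempotentElem_toSubmodule
  have CC : C * C = C := SC.isIdempotentElem_toSubmodule
  have sp : ∀ (x : U) (N P : Submodule Z U), (∀ a ∈ N, x * a ∈ P) →
      Submodule.span Z {x} * N ≤ P := by
    intro x N P hx
    rw [Submodule.mul_le]
    intro m hm n hn
    obtain ⟨c, rfl⟩ := Submodule.mem_span_singleton.1 hm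
    rw [smul_mul_assoc]
    exact P.smul_mem c (hx n hn)
  have stab : ∀ x ∈ ({e, f, h} : Set U),
      Submodule.span Z {x} * (A * B * C) ≤ A * B * C := by
    rintro x (rfl | rfl | rfl)
    · have h1 := sp x A _ eA
      have h2 := sp x SB.toSubmodule _ eB
      calc Submodule.span Z {x} * (A * B * C) = (Submodule.span Z {x} * A) * B * C := by
            simp only [mul_assoc]
        _ ≤ (A * (B ⊔ Submodule.span Z {x})) * B * C := by gcongr
        _ = A * (B * B) * C ⊔ A * (Submodule.span Z {x} * B) * C := by
            simp only [Submodule.mul_sup, Submodule.sup_mul, mul_assoc]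
        _ ≤ A * B * C ⊔ A * (B * C) * C := by rw [BB]; gcongr
        _ = A * B * C := by
            rw [mul_assoc A (B * C), mul_assoc B, CC, ← mul_assoc, sup_idem]
    · calc Submodule.span Z {x} * (A * B * C) = (Submodule.span Z {x} * A) * B * C := by
            simp only [mul_assoc]
        _ ≤ A * B * C := by
            gcongr
            exact sp x A _ fun a ha => mul_mem (S := Subalgebra Z U) fA ha
    · calc Submodule.span Z {x} * (A * B * C) = (Submodule.span Z {x} * A) * B * C := by
            simp only [mul_assoc]
        _ ≤ (A * B) * B * C := mul_le_mul_left (mul_le_mul_left (sp x A _ hAB) _) _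
        _ = A * B * C := by rw [mul_assoc A, BB]
  have all : ∀ g : U, ∀ m ∈ A * B * C, g * m ∈ A * B * C := by
    intro g
    have hg : g ∈ Algebra.adjoin F {e, f, h} := by rw [gen]; trivial
    induction hg using Algebra.adjoin_induction with
    | mem x hx =>
      intro m hm
      exact stab x hx (Submodule.mul_mem_mul (Submodule.mem_span_singleton_self x) hm)
    | algebraMap r => intro m hm; rw [← Algebra.smul_def]; exact smulmem _ _ _ hm
    | add x y _ _ hx hy => intro m hm; rw [add_mul]; exact add_mem (hx m hm) (hy m hm)
    | mul x y _ _ hx hy => intro m hm; rw [mul_assoc x y m]; exact hx _ (hy m hm)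
  have top : A * B * C = ⊤ := by
    rw [eq_top_iff]
    intro g _
    have h1 : (1 : U) ∈ A * B * C := by
      simpa using Submodule.mul_mem_mul (Submodule.mul_mem_mul
        (show (1 : U) ∈ A from one_mem SA) (show (1 : U) ∈ B from one_mem SB))
        (show (1 : U) ∈ C from one_mem SC)
    simpa using all g 1 h1
  have : Module.Finite Z U := ⟨top ▸ fgM⟩
  exact IsIntegral.of_finite Z u

end
end UeaSl2

/-- Over a field of prime characteristic `p`, the universal enveloping algebra `U(sl₂(F))`
is integral over its center: every element is a root of a monic polynomial with coefficients
in the center. -/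
theorem uea_sl2_integral_over_center (F : Type*) [Field F] (p : ℕ) (hp : p.Prime)
    [CharP F p] :
    ∀ u : UniversalEnvelopingAlgebra F (sl (Fin 2) F),
      IsIntegral
        (Subring.center (UniversalEnvelopingAlgebra F (sl (Fin 2) F))) u := by
  intro u
  let e : sl (Fin 2) F := single 0 1 (by decide) (1 : F)
  let f : sl (Fin 2) F := single 1 0 (by decide) (1 : F)
  let h : sl (Fin 2) F := singleSubSingle 0 1 (1 : F)
  letI : LieRing (UniversalEnvelopingAlgebra F (sl (Fin 2) F)) := LieRing.ofAssociativeRing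
  letI : LieAlgebra F (UniversalEnvelopingAlgebra F (sl (Fin 2) F)) :=
    LieAlgebra.ofAssociativeAlgebra
  let i := UniversalEnvelopingAlgebra.ι F (L := sl (Fin 2) F)
  have lie : ∀ x y : sl (Fin 2) F, i x * i y = i y * i x + i ⁅x, y⁆ := by
    intro x y
    rw [LieHom.map_lie, LieRing.of_associative_ring_bracket]; abel
  have hf : ⁅h, f⁆ = -((2 : F) • f) := by
    ext a b
    fin_cases a <;> fin_cases b <;>
    simp [-LieSubalgebra.coe_bracket, h, f, sl_bracket, Matrix.mul_apply, Matrix.single_apply] <;> norm_num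
  have he : ⁅h, e⁆ = (2 : F) • e := by
    ext a b
    fin_cases a <;> fin_cases b <;>
    simp [-LieSubalgebra.coe_bracket, h, e, sl_bracket, Matrix.mul_apply, Matrix.single_apply] <;> norm_num
  have ef : ⁅e, f⁆ = h := by
    ext a b
    fin_cases a <;> fin_cases b <;>
    simp [-LieSubalgebra.coe_bracket, h, e, f, sl_bracket, Matrix.mul_apply, Matrix.single_apply]
  have dec : ∀ x : sl (Fin 2) F, x = x.1 0 1 • e + x.1 1 0 • f + x.1 0 0 • h := by
    intro x
    have htr : x.1 0 0 + x.1 1 1 = 0 := by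
      have := x.2
      rw [← Matrix.trace_fin_two]
      exact this
    ext a b
    fin_cases a <;> fin_cases b <;>
    simp [h, e, f, Matrix.single_apply]
    linear_combination htr
  refine UeaSl2.main (F := F) (e := i e) (f := i f) (h := i h) p hp ?_ ?_ ?_ ?_ u
  · rw [eq_top_iff]
    intro g _
    obtain ⟨t, rfl⟩ : ∃ t, UniversalEnvelopingAlgebra.mkAlgHom F (sl (Fin 2) F) t = g :=
      RingCon.mkₐ_surjective _ g
    induction t using TensorAlgebra.induction with
    | algebraMap r => rw [AlgHom.commutes]; exact Subalgebra.algebraMap_mem _ r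
    | ι x =>
      change i x ∈ _
      obtain ⟨a, b, c, hx⟩ : ∃ a b c : F, x = a • e + b • f + c • h := ⟨_, _, _, dec x⟩
      rw [hx]
      simp only [map_add, map_smul]
      refine add_mem (add_mem ?_ ?_) ?_ <;>
      exact Subalgebra.smul_mem _ (Algebra.subset_adjoin (by simp)) _
    | mul a b ha hb => rw [map_mul]; exact mul_mem (ha trivial) (hb trivial)
    | add a b ha hb => rw [map_add]; exact add_mem (ha trivial) (hb trivial)
  · rw [lie, hf]; simp [sub_eq_add_neg]
  · rw [lie, he]; simp
  · rw [lie, ef]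

end
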